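/- Let n ≥ 2 and 2 ≤ w with w dividing n(n-1), and let b = n(n-1)/w. Let B_1, ..., B_b ⊆ {1, ..., n} be the blocks of an (n, w, w-1) block design: each |B_i| = w, and every pair of distinct points of {1, ..., n} lies in exactly w-1 of the blocks. Then there exist vectors v_1, ..., v_b ∈ ℝ^n with supp(v_i) ⊆ B_i for each i, such that the frame {e_1, ..., e_n} ∪ {v_1, ..., v_b} of size n + n(n-1)/w is vital: it permits phase retrieval, and removing any single vector destroys phase retrieval. -/

import Mathlib

open Matrix

/-- An indexed family of vectors in `ℝ^n` permits phase retrieval. -/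
def PhaseRetrievalFam {ι : Type*} {n : ℕ} (u : ι → Fin n → ℝ) : Prop :=
  ∀ x y : Fin n → ℝ, (∀ i, (u i ⬝ᵥ x) ^ 2 = (u i ⬝ᵥ y) ^ 2) → x = y ∨ x = -y

/-!
Phase retrieval fails exactly when there are nonzero `x`, `z` such that every frame vector is
orthogonal to `x` or to `z`. Choose the entries of the `v i` on their blocks generically. By Hall's
theorem, a nonzero vector orthogonal to `v i` for all `i ∈ T` has in its support a set of points
that meets fewer blocks of `T` than it has elements. If every frame vector were orthogonal to `x` or
to `z`, then `x` and `z` would have disjoint supports because of the `e k`, and so there would be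
disjoint sets `A`, `C` such that at most `#A + #C - 2` blocks meet both. Double counting of the
blocks through pairs in `A × C` rules this out.

Each point `k` lies on exactly `n - 1` blocks, so exactly `n` frame vectors may fail to be
orthogonal to `e k`; without one of them, some nonzero `z` is orthogonal to the others.

The block size enters only through the weights `1 / (#(B i) - 1)`, and may vary from block to block.
-/

open Finset Function

section PhaseRetrieval

variable {κ : Type*} {n : ℕ} {u : κ → Fin n → ℝ}

/-- A vital frame: it permits phase retrieval, but no longer does so after the removal of any one
member of the family. -/
def IsVital (u : κ → Fin n → ℝ) : Prop :=
  PhaseRetrievalFam u ∧ ∀ j₀ : κ, ¬ PhaseRetrievalFam fun i : {i // i ≠ j₀} => u i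

theorem phaseRetrievalFam_iff_eq_zero_or_eq_zero :
    PhaseRetrievalFam u ↔
      ∀ x z : Fin n → ℝ, (∀ i, u i ⬝ᵥ x = 0 ∨ u i ⬝ᵥ z = 0) → x = 0 ∨ z = 0 := by
  constructor
  · intro hu x z hxz
    have hsq (i : κ) : (u i ⬝ᵥ (x + z)) ^ 2 = (u i ⬝ᵥ (x - z)) ^ 2 := by
      have hprod : u i ⬝ᵥ x * u i ⬝ᵥ z = 0 := mul_eq_zero.mpr (hxz i)
      rw [dotProduct_add, dotProduct_sub]
      linear_combination 4 * hprod
    rcases hu _ _ hsq with h | h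
    · exact .inr (self_eq_neg.mp (add_left_cancel (h.trans (sub_eq_add_neg x z))))
    · rw [neg_sub, sub_eq_neg_add, add_left_inj] at h
      exact .inl (self_eq_neg.mp h)
  · intro hu x y hxy
    have horth (i : κ) : u i ⬝ᵥ (x - y) = 0 ∨ u i ⬝ᵥ (x + y) = 0 := by
      rw [← mul_eq_zero, dotProduct_sub, dotProduct_add]
      linear_combination hxy i
    exact (hu _ _ horth).imp sub_eq_zero.mp eq_neg_of_add_eq_zero_left

theorem exists_ne_zero_forall_dotProduct_eq_zero {K α : Type*} [Field K] [Fintype α]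
    {S : Finset κ} (hS : #S < Fintype.card α) (v : κ → α → K) :
    ∃ z : α → K, z ≠ 0 ∧ ∀ i ∈ S, v i ⬝ᵥ z = 0 := by
  let L : (α → K) →ₗ[K] S → K := Matrix.mulVecLin (Matrix.of fun i : S => v i)
  have hker : LinearMap.ker L ≠ ⊥ := LinearMap.ker_ne_bot_of_finrank_lt (by simpa using hS)
  obtain ⟨z, hz, hz0⟩ := Submodule.exists_mem_ne_zero_of_ne_bot hker
  exact ⟨z, hz0, fun i hi => congrFun (LinearMap.mem_ker.mp hz) ⟨i, hi⟩⟩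

theorem not_phaseRetrievalFam_ne_of_card_le {x : Fin n → ℝ} (hx : x ≠ 0) {S : Finset κ}
    (hS : #S ≤ n) (horth : ∀ i ∉ S, u i ⬝ᵥ x = 0) {j₀ : κ} (hj₀ : j₀ ∈ S) :
    ¬ PhaseRetrievalFam fun i : {i // i ≠ j₀} => u i := by
  classical
  have hcard : #(S.erase j₀) < Fintype.card (Fin n) := by
    rw [Fintype.card_fin]
    exact (card_erase_lt_of_mem hj₀).trans_le hS
  obtain ⟨z, hz, hzS⟩ := exists_ne_zero_forall_dotProduct_eq_zero hcard u
  rw [phaseRetrievalFam_iff_eq_zero_or_eq_zero]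
  intro hu
  refine (hu x z fun ⟨i, hi⟩ => ?_).elim hx hz
  by_cases hiS : i ∈ S
  · exact .inr (hzS i (mem_erase.mpr ⟨hi, hiS⟩))
  · exact .inl (horth i hiS)

end PhaseRetrieval

section Generic

variable {ι α K : Type*} [DecidableEq α]

/-- The family `v` is generic among the families with `v i` supported in `B i`: the square
submatrices of `v` with columns `J` are nonsingular whenever their rows `f j` form a system of
representatives, that is, `f` is injective and `j ∈ B (f j)`. -/
structure IsGenericOn [CommRing K] (B : ι → Finset α) (v : ι → α → K) : Prop where
  mem_of_ne_zero : ∀ i j, v i j ≠ 0 → j ∈ B i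
  det_ne_zero : ∀ (J : Finset α) (f : J → ι), Injective f →
    (∀ j : J, (j : α) ∈ B (f j)) → (Matrix.of fun j k : J => v (f j) k).det ≠ 0

theorem exists_forall_eval_ne_zero {σ : Type*} [CommRing K] [IsDomain K] [Infinite K]
    [Finite ι] {p : ι → MvPolynomial σ K} (hp : ∀ i, p i ≠ 0) :
    ∃ x : σ → K, ∀ i, MvPolynomial.eval x (p i) ≠ 0 := by
  have := Fintype.ofFinite ι
  have hprod : ∏ i, p i ≠ 0 := prod_ne_zero_iff.mpr fun i _ => hp i
  obtain ⟨x, hx⟩ : ∃ x, MvPolynomial.eval x (∏ i, p i) ≠ 0 := by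
    contrapose! hprod
    exact MvPolynomial.funext fun x => by rw [hprod x, map_zero]
  rw [map_prod, prod_ne_zero_iff] at hx
  exact ⟨x, fun i => hx i (mem_univ i)⟩

theorem det_X_ne_zero_of_matching [CommRing K] [Nontrivial K] {m : Type*}
    [Fintype m] [DecidableEq m] {B : ι → Finset α} {f : m → ι} {g : m → α} (hf : Injective f)
    (hg : Injective g) (hfg : ∀ j, g j ∈ B (f j)) :
    (Matrix.of fun j k => if g k ∈ B (f j) then
      (MvPolynomial.X (f j, g k) : MvPolynomial (ι × α) K) else 0).det ≠ 0 := by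
  classical
  let x : ι × α → K := fun ia => if ∃ l, f l = ia.1 ∧ g l = ia.2 then 1 else 0
  have hx (j k : m) : x (f j, g k) = if j = k then 1 else 0 := by
    simp [x, hf.eq_iff, hg.eq_iff]
  refine ne_zero_of_map (f := MvPolynomial.eval x) ?_
  rw [RingHom.map_det]
  convert one_ne_zero (α := K)
  rw [← det_one (n := m)]
  congr 1
  ext j k
  rcases eq_or_ne j k with rfl | hjk
  · simp [hx, hfg]
  · simp [apply_ite, hx, hjk]

theorem exists_isGenericOn [CommRing K] [IsDomain K] [Infinite K] [Finite ι] [Finite α]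
    (B : ι → Finset α) : ∃ v : ι → α → K, IsGenericOn B v := by
  let Matching := Σ J : Finset α, {f : J → ι // Injective f ∧ ∀ j : J, (j : α) ∈ B (f j)}
  obtain ⟨x, hx⟩ := exists_forall_eval_ne_zero fun M : Matching =>
    det_X_ne_zero_of_matching (K := K) M.2.2.1 Subtype.val_injective M.2.2.2
  refine ⟨fun i j => if j ∈ B i then x (i, j) else 0, fun i j h => ?_, fun J f hf hfB => ?_⟩
  · exact (ite_ne_right_iff.mp h).1
  · have hdet := hx ⟨J, f, hf, hfB⟩
    rw [RingHom.map_det] at hdet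
    convert hdet
    ext j k
    by_cases hk : (k : α) ∈ B (f j) <;> simp [hk]

namespace IsGenericOn

variable [CommRing K] [IsDomain K] [Fintype α] {B : ι → Finset α} {v : ι → α → K} {u : α → K}

theorem eq_zero_of_matching (hv : IsGenericOn B v) {J : Finset α} (hJ : ∀ j ∉ J, u j = 0)
    {f : J → ι} (hf : Injective f) (hfB : ∀ j : J, (j : α) ∈ B (f j))
    (horth : ∀ j, v (f j) ⬝ᵥ u = 0) : u = 0 := by
  have hker : (Matrix.of fun j k : J => v (f j) k) *ᵥ (fun k => u k) = 0 := by
    ext j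
    calc ∑ k : J, v (f j) k * u k = ∑ k ∈ J, v (f j) k * u k :=
          sum_coe_sort J fun k => v (f j) k * u k
      _ = ∑ k, v (f j) k * u k :=
          sum_subset (subset_univ J) fun k _ hk => by rw [hJ k hk, mul_zero]
      _ = 0 := horth j
  have hzero := eq_zero_of_mulVec_eq_zero (hv.det_ne_zero J f hf hfB) hker
  ext j
  by_cases hj : j ∈ J
  · exact congrFun hzero ⟨j, hj⟩
  · exact hJ j hj

theorem exists_card_filter_lt_card [Finite ι] (hv : IsGenericOn B v) (hu : u ≠ 0)
    {T : Finset ι} (hT : ∀ i ∈ T, v i ⬝ᵥ u = 0) :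
    ∃ A : Finset α, (∀ j ∈ A, u j ≠ 0) ∧ #{i ∈ T | (A ∩ B i).Nonempty} < #A := by
  classical
  have := Fintype.ofFinite ι
  by_contra! hall
  let J : Finset α := {j | u j ≠ 0}
  obtain ⟨f, hf, hfTB⟩ : ∃ f : J → ι, Injective f ∧ ∀ j, f j ∈ T ∧ (j : α) ∈ B (f j) := by
    refine (Fintype.all_card_le_filter_rel_iff_exists_injective
      fun (j : J) i => i ∈ T ∧ (j : α) ∈ B i).mp fun A => ?_
    have hA := hall (A.map (Embedding.subtype _)) (by simp +contextual [J])
    rw [card_map] at hA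
    refine hA.trans (card_le_card fun i hi => ?_)
    obtain ⟨hiT, k, hk⟩ := mem_filter.mp hi
    obtain ⟨hkA, hkB⟩ := mem_inter.mp hk
    obtain ⟨j, hjA, rfl⟩ := mem_map.mp hkA
    exact mem_filter.mpr ⟨mem_univ i, j, hjA, hiT, hkB⟩
  have hJ : ∀ j ∉ J, u j = 0 := by simp [J]
  exact hu (hv.eq_zero_of_matching hJ hf (fun j => (hfTB j).2) fun j => hT _ (hfTB j).1)

end IsGenericOn

end Generic

section WeightedDesign

variable {ι α : Type*} [Fintype ι] [DecidableEq α]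

/-- A block design with variable block sizes: the blocks through any two distinct points have total
weight `1`, where a block of size `w` has weight `1 / (w - 1)`. For constant `w` this says that any
two distinct points lie in `w - 1` common blocks. -/
structure IsWeightedDesign (B : ι → Finset α) : Prop where
  two_le_card : ∀ i, 2 ≤ #(B i)
  sum_inv : ∀ p q, p ≠ q → ∑ i with p ∈ B i ∧ q ∈ B i, ((#(B i) : ℚ) - 1)⁻¹ = 1

theorem isWeightedDesign_of_card_eq {w : ℕ} (hw : 2 ≤ w) {B : ι → Finset α}
    (hcard : ∀ i, #(B i) = w) (hpair : ∀ p q, p ≠ q → #{i | p ∈ B i ∧ q ∈ B i} = w - 1) :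
    IsWeightedDesign B where
  two_le_card i := hw.trans_eq (hcard i).symm
  sum_inv p q hpq := by
    have hw1 : (w : ℚ) - 1 ≠ 0 := by
      rw [← Nat.cast_pred (by lia)]
      exact_mod_cast (by lia : w - 1 ≠ 0)
    simp only [hcard, sum_const, hpair p q hpq, nsmul_eq_mul]
    rw [Nat.cast_pred (by lia), mul_inv_cancel₀ hw1]

theorem sum_card_inter_mul_card_inter_mul {R : Type*} [CommSemiring R] (B : ι → Finset α)
    (A C : Finset α) (c : ι → R) :
    ∑ i, (#(A ∩ B i) * #(C ∩ B i) * c i : R) =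
      ∑ p ∈ A, ∑ q ∈ C, ∑ i with p ∈ B i ∧ q ∈ B i, c i := by
  have hblock (i : ι) : (#(A ∩ B i) * #(C ∩ B i) * c i : R) =
      ∑ p ∈ A, ∑ q ∈ C, if p ∈ B i ∧ q ∈ B i then c i else 0 := by
    simp only [ite_and, sum_ite_irrel, sum_const_zero, ← sum_filter, sum_const, filter_mem_eq_inter,
      nsmul_eq_mul, mul_assoc]
  simp only [hblock, sum_filter]
  rw [sum_comm]
  exact sum_congr rfl fun p _ => sum_comm

-- For `w = s + t` this says that `(1 - 1 / s) * (1 - 1 / t) ≤ (1 - 1 / a) * (1 - 1 / c)`.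
theorem mul_mul_add_sub_one_le_mul_mul {R : Type*} [CommRing R] [LinearOrder R]
    [IsStrictOrderedRing R] {s t a c w : R} (hs : 1 ≤ s) (ht : 1 ≤ t) (hsa : s ≤ a) (htc : t ≤ c)
    (hw : s + t ≤ w) : s * t * (a + c - 1) ≤ a * c * (w - 1) := by
  have hac : 0 ≤ a * c := mul_nonneg (by linarith) (by linarith)
  have hp : 0 ≤ (a - s) * (t * (t - 1)) :=
    mul_nonneg (by linarith) (mul_nonneg (by linarith) (by linarith))
  have hq : 0 ≤ (c - t) * (s * (s - 1)) :=
    mul_nonneg (by linarith) (mul_nonneg (by linarith) (by linarith))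
  have hpq : 0 ≤ (a - s) * (c - t) * (s + t - 1) :=
    mul_nonneg (mul_nonneg (by linarith) (by linarith)) (by linarith)
  calc s * t * (a + c - 1) ≤ a * c * (s + t - 1) := by linear_combination hp + hq + hpq
    _ ≤ a * c * (w - 1) := mul_le_mul_of_nonneg_left (by linarith) hac

namespace IsWeightedDesign

variable {B : ι → Finset α}

theorem card_sub_one_pos (hB : IsWeightedDesign B) (i : ι) : (0 : ℚ) < #(B i) - 1 := by
  have h : (2 : ℚ) ≤ #(B i) := mod_cast hB.two_le_card i
  linarith

theorem sum_card_inter_mul_card_inter (hB : IsWeightedDesign B) {A C : Finset α}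
    (hAC : Disjoint A C) :
    ∑ i, (#(A ∩ B i) * #(C ∩ B i) / (#(B i) - 1) : ℚ) = #A * #C := by
  have hpair : ∀ p ∈ A, ∀ q ∈ C, ∑ i with p ∈ B i ∧ q ∈ B i, ((#(B i) : ℚ) - 1)⁻¹ = 1 :=
    fun p hp q hq => hB.sum_inv p q (disjoint_iff_ne.mp hAC p hp q hq)
  simp only [div_eq_mul_inv]
  rw [sum_card_inter_mul_card_inter_mul, sum_congr rfl fun p hp => sum_congr rfl (hpair p hp)]
  simp

theorem card_filter_mem_add_one [Fintype α] (hB : IsWeightedDesign B) (p : α) :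
    #{i | p ∈ B i} + 1 = Fintype.card α := by
  have hblock (i : ι) : (#({p} ∩ B i) * #({p}ᶜ ∩ B i) / (#(B i) - 1) : ℚ) =
      if p ∈ B i then 1 else 0 := by
    split_ifs with hp
    · have hrest : {p}ᶜ ∩ B i = (B i).erase p := by ext; simp
      rw [singleton_inter_of_mem hp, card_singleton, hrest, cast_card_erase_of_mem hp,
        Nat.cast_one, one_mul, div_self (hB.card_sub_one_pos i).ne']
    · simp [singleton_inter_of_notMem hp]
  have hcount : (#{i | p ∈ B i} : ℚ) = #({p}ᶜ : Finset α) := by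
    simpa [hblock] using hB.sum_card_inter_mul_card_inter (LE.le.disjoint_compl_right (le_refl {p}))
  have hcompl := card_add_card_compl ({p} : Finset α)
  rw [card_singleton] at hcompl
  rw [← hcompl, add_comm, Nat.cast_injective hcount]

theorem card_inter_mul_card_inter_div_le (hB : IsWeightedDesign B) {A C : Finset α}
    (hAC : Disjoint A C) {i : ι} (hA : (A ∩ B i).Nonempty)
    (hC : (C ∩ B i).Nonempty) :
    (#(A ∩ B i) * #(C ∩ B i) / (#(B i) - 1) : ℚ) ≤ #A * #C / (#A + #C - 1) := by
  have hs : 1 ≤ #(A ∩ B i) := hA.card_pos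
  have ht : 1 ≤ #(C ∩ B i) := hC.card_pos
  have hsA : #(A ∩ B i) ≤ #A := card_le_card inter_subset_left
  have htC : #(C ∩ B i) ≤ #C := card_le_card inter_subset_left
  have hst : #(A ∩ B i) + #(C ∩ B i) ≤ #(B i) := by
    rw [← card_union_of_disjoint (hAC.mono inter_subset_left inter_subset_left)]
    exact card_le_card (union_subset inter_subset_right inter_subset_right)
  have hac : (0 : ℚ) < #A + #C - 1 := by
    have h : (2 : ℚ) ≤ #A + #C := mod_cast (by lia : 2 ≤ #A + #C)
    linarith
  rw [div_le_div_iff₀ (hB.card_sub_one_pos i) hac]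
  exact mul_mul_add_sub_one_le_mul_mul (mod_cast hs) (mod_cast ht) (mod_cast hsA) (mod_cast htC)
    (mod_cast hst)

theorem card_add_card_le (hB : IsWeightedDesign B) {A C : Finset α} (hA : A.Nonempty)
    (hC : C.Nonempty) (hAC : Disjoint A C) :
    #A + #C ≤ #{i | (A ∩ B i).Nonempty ∧ (C ∩ B i).Nonempty} + 1 := by
  set F : Finset ι := {i | (A ∩ B i).Nonempty ∧ (C ∩ B i).Nonempty}
  have ha : (1 : ℚ) ≤ #A := mod_cast hA.card_pos
  have hc : (1 : ℚ) ≤ #C := mod_cast hC.card_pos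
  have hpos : (0 : ℚ) < #A * #C := by positivity
  have hzero : ∀ i ∉ F, (#(A ∩ B i) * #(C ∩ B i) / (#(B i) - 1) : ℚ) = 0 := by
    intro i hi
    have hempty : A ∩ B i = ∅ ∨ C ∩ B i = ∅ := by
      simpa only [F, mem_filter_univ, not_and_or, not_nonempty_iff_eq_empty] using hi
    rcases hempty with h | h <;> simp [h]
  have hsum : (#A * #C : ℚ) ≤ #F * (#A * #C / (#A + #C - 1)) := calc
    (#A * #C : ℚ) = ∑ i, (#(A ∩ B i) * #(C ∩ B i) / (#(B i) - 1) : ℚ) :=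
        (hB.sum_card_inter_mul_card_inter hAC).symm
    _ = ∑ i ∈ F, (#(A ∩ B i) * #(C ∩ B i) / (#(B i) - 1) : ℚ) :=
        (sum_subset (subset_univ F) fun i _ => hzero i).symm
    _ ≤ ∑ i ∈ F, (#A * #C / (#A + #C - 1) : ℚ) := by
        refine sum_le_sum fun i hi => ?_
        obtain ⟨hiA, hiC⟩ := (mem_filter.mp hi).2
        exact hB.card_inter_mul_card_inter_div_le hAC hiA hiC
    _ = #F * (#A * #C / (#A + #C - 1)) := by rw [sum_const, nsmul_eq_mul]
  rw [mul_div_assoc', le_div_iff₀ (by linarith), mul_comm (#F : ℚ)] at hsum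
  have hF : (#A + #C - 1 : ℚ) ≤ #F := le_of_mul_le_mul_left hsum hpos
  exact_mod_cast sub_le_iff_le_add.mp hF

end IsWeightedDesign

end WeightedDesign

section Frame

variable {ι : Type*} {n : ℕ}

/-- The family consisting of the standard basis of `ℝ^n` and the vectors `v i`. -/
def withStdBasis (v : ι → Fin n → ℝ) : Fin n ⊕ ι → Fin n → ℝ :=
  Sum.elim (fun k => Pi.single k 1) v

theorem withStdBasis_inl_dotProduct (v : ι → Fin n → ℝ) (k : Fin n) (x : Fin n → ℝ) :
    withStdBasis v (.inl k) ⬝ᵥ x = x k :=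
  single_one_dotProduct k x

variable [Fintype ι] {B : ι → Finset (Fin n)} {v : ι → Fin n → ℝ}

theorem IsGenericOn.phaseRetrievalFam_withStdBasis (hv : IsGenericOn B v)
    (hcount : ∀ A C : Finset (Fin n), A.Nonempty → C.Nonempty → Disjoint A C →
      #A + #C ≤ #{i | (A ∩ B i).Nonempty ∧ (C ∩ B i).Nonempty} + 1) :
    PhaseRetrievalFam (withStdBasis v) := by
  classical
  rw [phaseRetrievalFam_iff_eq_zero_or_eq_zero]
  intro x z horth
  by_contra! hxz
  let T : Finset ι := {i | v i ⬝ᵥ x = 0}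
  have hTx : ∀ i ∈ T, v i ⬝ᵥ x = 0 := fun i hi => (mem_filter.mp hi).2
  have hTz : ∀ i ∈ Tᶜ, v i ⬝ᵥ z = 0 := fun i hi =>
    (horth (.inr i)).resolve_left fun hx => mem_compl.mp hi (mem_filter_univ i |>.mpr hx)
  obtain ⟨A, hAx, hA⟩ := hv.exists_card_filter_lt_card hxz.1 hTx
  obtain ⟨C, hCz, hC⟩ := hv.exists_card_filter_lt_card hxz.2 hTz
  have hAC : Disjoint A C := disjoint_left.mpr fun j hjA hjC => by
    have hj := horth (.inl j)
    simp only [withStdBasis_inl_dotProduct] at hj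
    exact hj.elim (hAx j hjA) (hCz j hjC)
  have hmeet : #{i | (A ∩ B i).Nonempty ∧ (C ∩ B i).Nonempty} ≤
      #{i ∈ T | (A ∩ B i).Nonempty} + #{i ∈ Tᶜ | (C ∩ B i).Nonempty} := by
    refine (card_le_card fun i hi => ?_).trans (card_union_le _ _)
    obtain ⟨hiA, hiC⟩ := (mem_filter.mp hi).2
    by_cases hiT : i ∈ T
    · exact mem_union_left _ (mem_filter.mpr ⟨hiT, hiA⟩)
    · exact mem_union_right _ (mem_filter.mpr ⟨mem_compl.mpr hiT, hiC⟩)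
  have hle := hcount A C (card_pos.mp (by lia)) (card_pos.mp (by lia)) hAC
  lia

theorem not_phaseRetrievalFam_withStdBasis_ne (hv : ∀ i j, v i j ≠ 0 → j ∈ B i)
    (hne : ∀ i, (B i).Nonempty) (hdeg : ∀ k, #{i | k ∈ B i} + 1 ≤ n) (j₀ : Fin n ⊕ ι) :
    ¬ PhaseRetrievalFam fun j : {j // j ≠ j₀} => withStdBasis v j := by
  let S (k : Fin n) : Finset (Fin n ⊕ ι) := disjSum {k} {i | k ∈ B i}
  have hS (k : Fin n) : #(S k) ≤ n := by
    rw [card_disjSum, card_singleton, add_comm]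
    exact hdeg k
  have horth (k : Fin n) : ∀ j ∉ S k, withStdBasis v j ⬝ᵥ Pi.single k 1 = 0 := by
    rintro (l | i) hj
    · have hlk : l ≠ k := by simpa [S] using hj
      rw [withStdBasis_inl_dotProduct, Pi.single_eq_of_ne hlk]
    · have hki : k ∉ B i := by simpa [S] using hj
      rw [dotProduct_single_one]
      exact not_not.mp (mt (hv i k) hki)
  obtain ⟨k, hk⟩ : ∃ k, j₀ ∈ S k := by
    rcases j₀ with k | i
    · exact ⟨k, by simp [S]⟩
    · obtain ⟨k, hk⟩ := hne i
      exact ⟨k, by simp [S, hk]⟩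
  have hsingle : (Pi.single k 1 : Fin n → ℝ) ≠ 0 := Pi.single_ne_zero_iff.mpr one_ne_zero
  exact not_phaseRetrievalFam_ne_of_card_le hsingle (hS k) (horth k) hk

end Frame

theorem stmt9_general {ι : Type*} [Fintype ι] {n : ℕ} {B : ι → Finset (Fin n)}
    (hB : IsWeightedDesign B) :
    ∃ v : ι → Fin n → ℝ, (∀ i j, v i j ≠ 0 → j ∈ B i) ∧ IsVital (withStdBasis v) := by
  obtain ⟨v, hv⟩ := exists_isGenericOn (K := ℝ) B
  have hne (i : ι) : (B i).Nonempty := card_pos.mp (two_pos.trans_le (hB.two_le_card i))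
  have hdeg (k : Fin n) : #{i | k ∈ B i} + 1 ≤ n := by
    rw [hB.card_filter_mem_add_one, Fintype.card_fin]
  exact ⟨v, hv.mem_of_ne_zero,
    hv.phaseRetrievalFam_withStdBasis fun _ _ => hB.card_add_card_le,
    not_phaseRetrievalFam_withStdBasis_ne hv.mem_of_ne_zero hne hdeg⟩

theorem stmt9 (n w b : ℕ) (hn : 2 ≤ n) (hw : 2 ≤ w) (hdvd : w ∣ n * (n - 1))
    (hb : b = n * (n - 1) / w)
    (B : Fin b → Finset (Fin n))
    (hcard : ∀ i, (B i).card = w)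
    (hpair : ∀ p q : Fin n, p ≠ q →
      (Finset.univ.filter (fun i => p ∈ B i ∧ q ∈ B i)).card = w - 1) :
    ∃ v : Fin b → Fin n → ℝ,
      (∀ i, ∀ j : Fin n, v i j ≠ 0 → j ∈ B i) ∧
      PhaseRetrievalFam (Sum.elim (fun k : Fin n => (Pi.single k 1 : Fin n → ℝ)) v) ∧
      ∀ j₀ : Fin n ⊕ Fin b,
        ¬ PhaseRetrievalFam (fun i : {i : Fin n ⊕ Fin b // i ≠ j₀} =>
            Sum.elim (fun k : Fin n => (Pi.single k 1 : Fin n → ℝ)) v i.1) :=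
  stmt9_general (isWeightedDesign_of_card_eq hw hcard hpair)
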